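/- Let [0,l] ⊂ ℝ be a compact interval, x₁,...,xₙ ∈ (0,l), and λ ≥ 0. Suppose ĝ : [0,l] → ℝ minimizes the objective F(g) = −(1/n)Σᵢ g(xᵢ) + λ·TV(g) + ∫₀ˡ e^{g(x)} dx over all functions of bounded variation on [0,l]. Then ĝ is constant on every open subinterval (a,b) ⊆ (0,l) that contains none of the points x₁,...,xₙ; that is, ĝ is piecewise constant with all discontinuities contained in {x₁,...,xₙ} ∪ {0,l}. -/

import Mathlib

open MeasureTheory Set

lemma bv_exp_int (l : ℝ) (hl : 0 < l) (g : ℝ → ℝ) (hg : eVariationOn g (Icc 0 l) ≠ ⊤) :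
    IntegrableOn (fun t => Real.exp (g t)) (Icc 0 l) := by
  have hm : AEMeasurable g (volume.restrict (Icc 0 l)) := by
    obtain ⟨p, q, hp, hq, h⟩ :=
      (BoundedVariationOn.locallyBoundedVariationOn hg).exists_monotoneOn_sub_monotoneOn
    rw [h]
    exact (aemeasurable_restrict_of_monotoneOn measurableSet_Icc hp).sub
      (aemeasurable_restrict_of_monotoneOn measurableSet_Icc hq)
  refine Integrable.of_bound (C := Real.exp (g 0 + (eVariationOn g (Icc 0 l)).toReal))
    (Real.measurable_exp.comp_aemeasurable hm).aestronglyMeasurable ?_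
  refine (ae_restrict_iff' measurableSet_Icc).2 (Filter.Eventually.of_forall fun t ht => ?_)
  rw [Real.norm_eq_abs, abs_of_pos (Real.exp_pos _), Real.exp_le_exp]
  have := BoundedVariationOn.sub_le hg ht (⟨le_rfl, hl.le⟩ : (0:ℝ) ∈ Icc 0 l)
  linarith

lemma spike_bv (s : Set ℝ) (a M : ℝ) :
    eVariationOn (fun t : ℝ => if t = a then M else 0) s ≠ ⊤ := by
  set f : ℝ → ℝ := fun t : ℝ => if t = a then M else 0
  let φ : ℝ → ℝ := fun t => if t < a then a - 1 else if t = a then a else a + 1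
  have h1 : f = f ∘ φ := by
    funext t
    simp only [f, φ, Function.comp]
    split_ifs <;> first | rfl | (exfalso; grind)
  have h2 := eVariationOn.comp_le_of_monotoneOn f (s := {a - 1, a, a + 1}) (t := s) φ
    (by
      intro p _ q _ hpq
      simp only [φ]
      split_ifs <;> first | linarith | (exfalso; grind))
    (by intro p _; simp only [φ]; split_ifs <;> simp)
  rw [← h1] at h2
  have h3 : eVariationOn f {a - 1, a, a + 1} ≠ ⊤ :=
    BoundedVariationOn.of_finite f {a - 1, a, a + 1}
  exact ne_top_of_le_ne_top h3 h2

lemma plateau_le (l c d s : ℝ) (hc : 0 ≤ c) (hd : d ≤ l) (hs : s ∈ Ioo c d) (g : ℝ → ℝ) :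
    eVariationOn (fun t => if t ∈ Ioo c d then g s else g t) (Icc 0 l)
      ≤ eVariationOn g (Icc 0 l) := by
  obtain ⟨hs1, hs2⟩ := hs
  let φ : ℝ → ℝ := fun t => if t ∈ Ioo c d then s else t
  have h1 : (fun t => if t ∈ Ioo c d then g s else g t) = g ∘ φ := by
    funext t
    simp only [φ, Function.comp]
    split_ifs <;> rfl
  rw [h1]
  refine eVariationOn.comp_le_of_monotoneOn g φ ?_ ?_
  · intro p _ q _ hpq
    simp only [φ, mem_Ioo]
    split_ifs <;> grind
  · intro p hp
    simp only [φ, mem_Ioo, mem_Icc] at *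
    split_ifs <;> grind

lemma plateau_lt (l c d s t0 u : ℝ) (hc : 0 ≤ c) (hd : d ≤ l) (hs : c < s) (hst : s < t0)
    (htu : t0 < u) (hu : u < d) (g : ℝ → ℝ) (hg : g u = g s) :
    eVariationOn (fun t => if t ∈ Ioo c d then g s else g t) (Icc 0 l) + edist (g s) (g t0)
      ≤ eVariationOn g (Icc 0 l) := by
  let φ : ℝ → ℝ := fun t => if t ∈ Ioo c d then (if t ≤ t0 then s else u) else t
  have h1 : (fun t => if t ∈ Ioo c d then g s else g t) = g ∘ φ := by
    funext t
    simp only [φ, Function.comp]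
    split_ifs <;> simp [hg]
  have h2 : eVariationOn (g ∘ φ) (Icc 0 l) ≤ eVariationOn g (Icc 0 s ∪ Icc u l) := by
    refine eVariationOn.comp_le_of_monotoneOn g φ ?_ ?_
    · intro p _ q _ hpq
      simp only [φ, mem_Ioo]
      split_ifs <;> grind
    · intro p hp
      simp only [φ, mem_Ioo, mem_Icc, mem_union] at *
      split_ifs <;> grind
  rw [h1]
  have h3 := eVariationOn.union' g (s := Icc 0 s) (t := Icc u l) (x := s) (y := u)
    (isGreatest_Icc (by linarith)) (isLeast_Icc (by linarith)) (by linarith)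
  rw [hg, edist_self] at h3
  have h4 := eVariationOn.Icc_add_Icc g (s := univ) (a := 0) (b := s) (c := u)
    (by linarith) (by linarith) (mem_univ _)
  have h5 := eVariationOn.Icc_add_Icc g (s := univ) (a := 0) (b := u) (c := l)
    (by linarith) (by linarith) (mem_univ _)
  simp only [univ_inter] at h4 h5
  have h6 : edist (g s) (g t0) ≤ eVariationOn g (Icc s u) :=
    eVariationOn.edist_le g ⟨le_rfl, by linarith⟩ ⟨hst.le, htu.le⟩
  rw [← h5, ← h4]
  calc _ ≤ eVariationOn g (Icc 0 s ∪ Icc u l) + eVariationOn g (Icc s u) := by gcongr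
    _ = _ := by rw [h3]; ring

/-- Representer theorem.  A minimizer of the fused density
objective `F g = -(1/n) Σᵢ g(xᵢ) + λ·TV(g) + ∫₀ˡ e^{g}` over functions of
bounded variation on `[0,l]` is constant on every open subinterval of `(0,l)`
containing no observation; i.e. it is piecewise constant with all
discontinuities in `{x₁,…,xₙ} ∪ {0,l}`. -/
theorem stmt_1
    (l : ℝ) (hl : 0 < l)
    (n : ℕ) (hn : 1 ≤ n)
    (x : Fin n → ℝ) (hx : ∀ i, x i ∈ Ioo 0 l)
    (lam : ℝ) (hlam : 0 ≤ lam)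
    (F : (ℝ → ℝ) → ℝ)
    (hF : ∀ g : ℝ → ℝ,
      F g = -(1 / (n : ℝ)) * ∑ i, g (x i)
        + lam * (eVariationOn g (Icc 0 l)).toReal
        + ∫ t in Icc 0 l, Real.exp (g t))
    (ghat : ℝ → ℝ)
    (hghatBV : eVariationOn ghat (Icc 0 l) ≠ ⊤)
    (hmin : ∀ g : ℝ → ℝ, eVariationOn g (Icc 0 l) ≠ ⊤ → F ghat ≤ F g) :
    ∀ c d : ℝ, c < d → Ioo c d ⊆ Ioo 0 l → (∀ i, x i ∉ Ioo c d) →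
      ∃ k : ℝ, ∀ t ∈ Ioo c d, ghat t = k := by
  intro c d hcd hsub hxi
  have hcd0 : 0 ≤ c ∧ d ≤ l := (Ioo_subset_Ioo_iff hcd).1 hsub
  obtain ⟨hc, hd⟩ := hcd0
  have hnpos : (0:ℝ) < n := by exact_mod_cast hn
  -- the regularization parameter is positive
  have hlampos : 0 < lam := by
    rcases hlam.lt_or_eq with h | h
    · exact h
    exfalso
    let i0 : Fin n := ⟨0, hn⟩
    let M : ℝ := n * (|F ghat| + l + 1)
    have hM : 0 ≤ M := by positivity
    have h1 := hmin (fun t => if t = x i0 then M else 0) (spike_bv _ _ _)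
    rw [hF (fun t => if t = x i0 then M else 0), ← h] at h1
    have h2 : M ≤ ∑ i, (if x i = x i0 then M else 0) := by
      have := Finset.single_le_sum (f := fun i => if x i = x i0 then M else 0)
        (fun i _ => by split_ifs <;> simp [hM]) (Finset.mem_univ i0)
      simpa using this
    have h3 : ∫ t in Icc 0 l, Real.exp (if t = x i0 then M else 0) = l := by
      have : ∫ t in Icc 0 l, Real.exp (if t = x i0 then M else 0) = ∫ t in Icc 0 l, (1:ℝ) := by
        apply integral_congr_ae
        refine ae_restrict_of_ae ?_
        have : ∀ᵐ t : ℝ, t ≠ x i0 := by simp [ae_iff]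
        filter_upwards [this] with t ht
        simp [ht]
      rw [this]
      simp [hl.le]
    rw [h3] at h1
    have h4 : (1 / (n:ℝ)) * M ≤ (1 / (n:ℝ)) * ∑ i, (if x i = x i0 then M else 0) := by gcongr
    have h5 : (1 / (n:ℝ)) * M = |F ghat| + l + 1 := by simp only [M]; field_simp
    have h6 := neg_abs_le (F ghat)
    linarith
  have hint := bv_exp_int l hl ghat hghatBV
  have hsub' : Ioo c d ⊆ Icc 0 l := hsub.trans Ioo_subset_Icc_self
  have hintI : IntegrableOn (fun t => Real.exp (ghat t)) (Ioo c d) := hint.mono_set hsub'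
  -- comparison with a plateau
  have key : ∀ k : ℝ,
      eVariationOn (fun t => if t ∈ Ioo c d then k else ghat t) (Icc 0 l) ≠ ⊤ →
      lam * (eVariationOn ghat (Icc 0 l)).toReal + ∫ t in Ioo c d, Real.exp (ghat t) ≤
      lam * (eVariationOn (fun t => if t ∈ Ioo c d then k else ghat t) (Icc 0 l)).toReal
        + (d - c) * Real.exp k := by
    intro k hk
    have h1 := hmin _ hk
    rw [hF, hF] at h1
    have h2 : ∀ i, (if x i ∈ Ioo c d then k else ghat (x i)) = ghat (x i) := fun i => if_neg (hxi i)
    simp only [h2] at h1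
    have hint2 := bv_exp_int l hl _ hk
    have e1 := integral_inter_add_sdiff (t := Ioo c d) measurableSet_Ioo hint
    have e2 := integral_inter_add_sdiff (t := Ioo c d) measurableSet_Ioo hint2
    rw [inter_eq_right.2 hsub'] at e1 e2
    have e3 : ∫ t in Ioo c d, Real.exp (if t ∈ Ioo c d then k else ghat t)
        = (d - c) * Real.exp k := by
      rw [setIntegral_congr_fun (g := fun _ => Real.exp k) measurableSet_Ioo
        (fun t ht => by simp only [if_pos ht])]
      simp [hcd.le]
    have e4 : ∫ t in Icc 0 l \ Ioo c d, Real.exp (if t ∈ Ioo c d then k else ghat t)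
        = ∫ t in Icc 0 l \ Ioo c d, Real.exp (ghat t) :=
      setIntegral_congr_fun (measurableSet_Icc.diff measurableSet_Ioo)
        (fun t ht => by simp only [if_neg ht.2])
    rw [e3, e4] at e2
    rw [← e1, ← e2] at h1
    linarith
  have hle : ∀ s ∈ Ioo c d, ∫ t in Ioo c d, Real.exp (ghat t) ≤ (d - c) * Real.exp (ghat s) := by
    intro s hs
    have h1 := plateau_le l c d s hc hd hs ghat
    have h2 := key (ghat s) (ne_top_of_le_ne_top hghatBV h1)
    have h3 := mul_le_mul_of_nonneg_left (ENNReal.toReal_mono hghatBV h1) hlam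
    linarith
  obtain ⟨A, hA⟩ : ∃ A : ℝ, (d - c) * A = ∫ t in Ioo c d, Real.exp (ghat t) :=
    ⟨(∫ t in Ioo c d, Real.exp (ghat t)) / (d - c), by
      have : d - c ≠ 0 := by linarith
      field_simp⟩
  have hdc : 0 < d - c := by linarith
  have hA2 : ∀ s ∈ Ioo c d, A ≤ Real.exp (ghat s) := fun s hs => by
    have := hle s hs
    rw [← hA] at this
    exact le_of_mul_le_mul_left this hdc
  have hconst : IntegrableOn (fun _ : ℝ => A) (Ioo c d) := by simp
  have hae : ∀ᵐ t ∂(volume.restrict (Ioo c d)), Real.exp (ghat t) = A := by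
    have h0 : ∫ t in Ioo c d, (Real.exp (ghat t) - A) = 0 := by
      rw [integral_sub hintI hconst, ← hA]
      simp [hcd.le]
    have hi : IntegrableOn (fun t => Real.exp (ghat t) - A) (Ioo c d) := hintI.sub hconst
    rw [setIntegral_eq_zero_iff_of_nonneg_ae _ hi] at h0
    · filter_upwards [h0] with t ht
      simpa [sub_eq_zero] using ht
    · refine (ae_restrict_iff' measurableSet_Ioo).2 (Filter.Eventually.of_forall fun t ht => ?_)
      simpa using hA2 t ht
  have hex : ∀ a b : ℝ, a < b → Ioo a b ⊆ Ioo c d → ∃ s ∈ Ioo a b, ghat s = Real.log A ∧ Real.exp (ghat s) = A := by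
    intro a b hab hs
    have h1 : ∀ᵐ t ∂(volume.restrict (Ioo a b)), Real.exp (ghat t) = A :=
      ae_restrict_of_ae_restrict_of_subset hs hae
    have h2 := h1.and (ae_restrict_mem (μ := volume) (measurableSet_Ioo (a := a) (b := b)))
    have : (ae (volume.restrict (Ioo a b))).NeBot := by
      rw [ae_neBot, Ne, Measure.restrict_eq_zero]
      simp [hab]
    obtain ⟨s, hs1, hs2⟩ := h2.exists
    exact ⟨s, hs2, by rw [← hs1, Real.log_exp], hs1⟩
  refine ⟨Real.log A, fun t0 ht0 => ?_⟩
  by_contra hne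
  obtain ⟨s, hs, hs', hsA⟩ := hex c t0 ht0.1 (Ioo_subset_Ioo_right ht0.2.le)
  obtain ⟨u, hu, hu', -⟩ := hex t0 d ht0.2 (Ioo_subset_Ioo_left ht0.1.le)
  have h1 := plateau_lt l c d s t0 u hc hd hs.1 hs.2 hu.1 hu.2 ghat (hu'.trans hs'.symm)
  have hfin := ne_top_of_le_ne_top hghatBV (le_self_add.trans h1)
  have h2 := key (ghat s) hfin
  have h3 := ENNReal.toReal_mono hghatBV h1
  rw [ENNReal.toReal_add hfin (edist_ne_top _ _), ← dist_edist] at h3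
  have h4 : 0 < dist (ghat s) (ghat t0) := dist_pos.2 (by rw [hs']; exact fun h => hne h.symm)
  have h5 : Real.exp (ghat s) ≤ A := hsA.le
  have h6 : (d - c) * Real.exp (ghat s) ≤ (d - c) * A := by gcongr
  nlinarith [mul_pos hlampos h4]
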